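/- arXiv:1603.04320 — 4 statements merged into one kernel-verified Lean document; each statement's English description precedes it below -/
import Mathlib

section
/- Let F be a homogeneous cubic polynomial in 5 variables X₀, …, X₄ over ℂ such that for every v ∈ ℂ⁵ the quadric ∂_v F = Σᵢ vᵢ ∂F/∂Xᵢ is a degenerate quadratic form, and such that F is not a cone. Then F is singular along a plane: there exists a 3-dimensional linear subspace W ⊆ ℂ⁵ such that every first partial derivative ∂F/∂Xᵢ vanishes at every point of W. -/
open MvPolynomial

namespace VanishingHessian

section PolynomialVectors

variable {n : ℕ}

/-- The value at `a` of a vector of polynomials. -/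
noncomputable def evalVec (a : Fin n → ℂ) (p : Fin n → MvPolynomial (Fin n) ℂ) : Fin n → ℂ :=
  fun j => eval a (p j)

/-- The entrywise partial derivative of a vector of polynomials. -/
noncomputable def pderivVec (m : Fin n) (p : Fin n → MvPolynomial (Fin n) ℂ) :
    Fin n → MvPolynomial (Fin n) ℂ :=
  fun j => pderiv m (p j)

lemma linearMap_apply_eq_sum (g : (Fin n → ℂ) →ₗ[ℂ] ℂ) (y : Fin n → ℂ) :
    g y = ∑ j, y j * g (Pi.single j 1) := by
  conv_lhs => rw [pi_eq_sum_univ' y]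
  simp [map_sum]

lemma bilinearMap_apply_eq_sum (β : (Fin n → ℂ) →ₗ[ℂ] (Fin n → ℂ) →ₗ[ℂ] ℂ)
    (x y : Fin n → ℂ) :
    β x y = ∑ i, ∑ j, x i * y j * β (Pi.single i 1) (Pi.single j 1) := by
  have h := linearMap_apply_eq_sum (β.flip y) x
  simp only [LinearMap.flip_apply] at h
  rw [h]
  refine Finset.sum_congr rfl fun i _ => ?_
  rw [linearMap_apply_eq_sum (β (Pi.single i 1)) y, Finset.mul_sum]
  exact Finset.sum_congr rfl fun j _ => by ring

/-- Leibniz rule for a polynomial identity between values of bilinear and linear maps. -/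
lemma bilinear_leibniz (β : (Fin n → ℂ) →ₗ[ℂ] (Fin n → ℂ) →ₗ[ℂ] ℂ)
    (γ : (Fin n → ℂ) →ₗ[ℂ] ℂ) (p q : Fin n → MvPolynomial (Fin n) ℂ)
    (h : ∀ a, β a (evalVec a p) + γ (evalVec a q) = 0) (m : Fin n) (a : Fin n → ℂ) :
    β (Pi.single m 1) (evalVec a p) + β a (evalVec a (pderivVec m p)) +
      γ (evalVec a (pderivVec m q)) = 0 := by
  have hP : (∑ i, ∑ j, C (β (Pi.single i 1) (Pi.single j 1)) * (X i * p j)) +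
      ∑ j, C (γ (Pi.single j 1)) * q j = 0 := by
    refine MvPolynomial.funext fun a => ?_
    rw [map_zero, ← h a, bilinearMap_apply_eq_sum β, linearMap_apply_eq_sum γ]
    simp [evalVec, map_sum, mul_comm]
  have hD := congrArg (eval a) (congrArg (pderiv m) hP)
  rw [bilinearMap_apply_eq_sum β a, linearMap_apply_eq_sum γ,
    linearMap_apply_eq_sum (β (Pi.single m 1)), ← (map_zero (eval a)),
    ← map_zero (pderiv (R := ℂ) m), ← hD]
  simp only [map_add, map_sum, pderiv_mul, pderiv_C, pderiv_X, map_mul, eval_C, eval_X,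
    zero_mul, zero_add, mul_add, Finset.sum_add_distrib, evalVec, pderivVec]
  congr 1
  · congr 1
    · symm
      rw [Finset.sum_eq_single m]
      · simp [mul_comm]
      · intro i _ hi
        simp [hi]
      · simp
    · simp [mul_comm]
  · simp [mul_comm]

/-- A linear system of square matrices that are all singular has a polynomial kernel vector. -/
lemma exists_polynomial_kernel
    (τ : (Fin n → ℂ) →ₗ[ℂ] (Fin n → ℂ) →ₗ[ℂ] (Fin n → ℂ) →ₗ[ℂ] ℂ)
    (h : ∀ v, ∃ w, w ≠ 0 ∧ τ v w = 0) :
    ∃ p : Fin n → MvPolynomial (Fin n) ℂ, p ≠ 0 ∧ ∀ a, τ a (evalVec a p) = 0 := by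
  let M : Matrix (Fin n) (Fin n) (MvPolynomial (Fin n) ℂ) :=
    Matrix.of fun l j => ∑ i, X i * C (τ (Pi.single i 1) (Pi.single j 1) (Pi.single l 1))
  have hM : ∀ (a y : Fin n → ℂ) (l : Fin n),
      ∑ j, eval a (M l j) * y j = τ a y (Pi.single l 1) := by
    intro a y l
    have := bilinearMap_apply_eq_sum
      (τ.compr₂ (LinearMap.applyₗ (Pi.single l (1 : ℂ)) : ((Fin n → ℂ) →ₗ[ℂ] ℂ) →ₗ[ℂ] ℂ)) a y
    simp only [LinearMap.compr₂_apply, LinearMap.applyₗ_apply_apply] at this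
    rw [this, Finset.sum_comm]
    simp only [M, Matrix.of_apply, map_sum, map_mul, eval_X, eval_C, Finset.sum_mul]
    exact Finset.sum_congr rfl fun j _ => Finset.sum_congr rfl fun i _ => by ring
  have hdet : M.det = 0 := by
    refine MvPolynomial.funext fun a => ?_
    rw [map_zero, RingHom.map_det]
    obtain ⟨w, hw, hτ⟩ := h a
    refine Matrix.exists_mulVec_eq_zero_iff.mp ⟨w, hw, ?_⟩
    ext l
    have := hM a w l
    rw [hτ] at this
    simpa [Matrix.mulVec, dotProduct] using this
  obtain ⟨p, hp, hMp⟩ := Matrix.exists_mulVec_eq_zero_iff.mpr hdet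
  refine ⟨p, hp, fun a => ?_⟩
  refine LinearMap.pi_ext' fun l => LinearMap.ext_ring ?_
  have := congrArg (eval a) (congrFun hMp l)
  simp only [Matrix.mulVec, dotProduct, map_sum, map_mul, Pi.zero_apply, map_zero] at this
  simpa [← hM a _ l, evalVec] using this

/-- A nonzero linear functional, seen as a nonzero polynomial. -/
lemma exists_polynomial_of_functional (g : (Fin n → ℂ) →ₗ[ℂ] ℂ) (hg : g ≠ 0) :
    ∃ L : MvPolynomial (Fin n) ℂ, L ≠ 0 ∧ ∀ a, eval a L = g a := by
  have h : ∀ a, eval a (∑ j, X j * C (g (Pi.single j 1))) = g a := fun a => by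
    rw [linearMap_apply_eq_sum g a]
    simp
  refine ⟨_, fun h0 => hg (LinearMap.ext fun a => ?_), h⟩
  rw [← h a, h0]
  simp

end PolynomialVectors

/-- The partial derivatives of a polynomial kernel vector of a symmetric trilinear form `τ` are
isotropic for `τ a`. -/
lemma kernel_derivatives_isotropic {n : ℕ}
    (τ : (Fin n → ℂ) →ₗ[ℂ] (Fin n → ℂ) →ₗ[ℂ] (Fin n → ℂ) →ₗ[ℂ] ℂ)
    (h₁ : ∀ x y z, τ x y z = τ y x z) (h₂ : ∀ x y z, τ x y z = τ x z y)
    (p : Fin n → MvPolynomial (Fin n) ℂ) (hp : ∀ a, τ a (evalVec a p) = 0) (a : Fin n → ℂ) :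
    (∀ m z, τ (evalVec a p) (Pi.single m 1) z = -τ a (evalVec a (pderivVec m p)) z) ∧
      ∀ m m', τ a (evalVec a (pderivVec m p)) (evalVec a (pderivVec m' p)) = 0 := by
  have first : ∀ m z a, τ (Pi.single m 1) (evalVec a p) z +
      τ a (evalVec a (pderivVec m p)) z = 0 := fun m z a => by
    simpa using bilinear_leibniz
      (τ.compr₂ (LinearMap.applyₗ z : ((Fin n → ℂ) →ₗ[ℂ] ℂ) →ₗ[ℂ] ℂ)) 0 p 0
      (fun a => by simp [hp a]) m a
  have second : ∀ m m' z, τ (Pi.single m' 1) (evalVec a (pderivVec m p)) z +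
      τ a (evalVec a (pderivVec m' (pderivVec m p))) z +
      τ (Pi.single m 1) (evalVec a (pderivVec m' p)) z = 0 := fun m m' z => by
    simpa using bilinear_leibniz
      (τ.compr₂ (LinearMap.applyₗ z : ((Fin n → ℂ) →ₗ[ℂ] ℂ) →ₗ[ℂ] ℂ))
      ((τ (Pi.single m 1)).flip z) (pderivVec m p) p
      (fun a => by simpa [add_comm] using first m z a) m' a
  refine ⟨fun m z => ?_, fun m m' => ?_⟩
  · rw [h₁]
    exact eq_neg_of_add_eq_zero_left (first m z a)
  · have e := second m m' (evalVec a p)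
    rw [h₂ a _ (evalVec a p), hp a] at e
    have e₁ := first m (evalVec a (pderivVec m' p)) a
    have e₂ := first m' (evalVec a (pderivVec m p)) a
    rw [h₂ _ (evalVec a p)] at e₁ e₂
    rw [h₂ a (evalVec a (pderivVec m' p))] at e₂
    simp only [LinearMap.zero_apply] at e
    linear_combination (e₁ + e₂ - e) / 2

/-- In dimension five, the form attached to a kernel vector has vanishing `2 × 2` minors. -/
lemma minor_eq_zero
    (τ : (Fin 5 → ℂ) →ₗ[ℂ] (Fin 5 → ℂ) →ₗ[ℂ] (Fin 5 → ℂ) →ₗ[ℂ] ℂ)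
    (h₁ : ∀ x y z, τ x y z = τ y x z) (h₂ : ∀ x y z, τ x y z = τ x z y)
    {a k b b' u u' : Fin 5 → ℂ} (ha : τ a a a ≠ 0) (hk : k ≠ 0) (hak : τ a k = 0)
    (hu : ∀ z, τ k b z = -τ a u z) (hu' : ∀ z, τ k b' z = -τ a u' z)
    (huu : τ a u u = 0) (huu' : τ a u u' = 0) (hu'u' : τ a u' u' = 0) (x y : Fin 5 → ℂ) :
    τ k b x * τ k b' y = τ k b y * τ k b' x := by
  by_contra hne
  have hau : ∀ z, τ a u z = - τ k b z := fun z => by rw [hu, neg_neg]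
  have hau' : ∀ z, τ a u' z = - τ k b' z := fun z => by rw [hu', neg_neg]
  have hkz : ∀ z, τ a z k = 0 := fun z => by rw [h₂, hak, LinearMap.zero_apply]
  have hka : ∀ z, τ k z a = 0 := fun z => by
    rw [h₂, h₁, hak, LinearMap.zero_apply]
  have hu'u : τ a u' u = 0 := by rw [h₂, huu']
  have haau : τ a a u = 0 := by rw [h₂, hau, hka, neg_zero]
  have haau' : τ a a u' = 0 := by rw [h₂, hau', hka, neg_zero]
  have hkb : τ k b k = 0 ∧ τ k b u = 0 ∧ τ k b u' = 0 := by simp [hu, hkz, huu, huu']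
  have hkb' : τ k b' k = 0 ∧ τ k b' u = 0 ∧ τ k b' u' = 0 := by
    simp [hu', hkz, hu'u, hu'u']
  have hli : LinearIndependent ℂ ![k, u, u', a, x, y] := by
    rw [Fintype.linearIndependent_iff]
    intro c hc
    replace hc : c 0 • k + c 1 • u + c 2 • u' + c 3 • a + c 4 • x + c 5 • y = 0 := by
      simpa [Fin.sum_univ_six] using hc
    have e₁ := congrArg (τ k b) hc
    have e₂ := congrArg (τ k b') hc
    have e₃ := congrArg (τ a a) hc
    have e₄ := congrArg (fun v => τ a v x) hc
    have e₅ := congrArg (fun v => τ a v y) hc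
    simp only [map_add, map_smul, map_zero, LinearMap.add_apply, LinearMap.smul_apply,
      LinearMap.zero_apply, smul_eq_mul, hkb, hkb', hka, hkz, haau, haau', hak, hau, hau',
      mul_zero, zero_add] at e₁ e₂ e₃ e₄ e₅
    have hne' : τ k b x * τ k b' y - τ k b y * τ k b' x ≠ 0 := sub_ne_zero.mpr hne
    have c₄ : c 4 = 0 := (mul_eq_zero.mp (show c 4 * _ = 0 by
      linear_combination τ k b' y * e₁ - τ k b y * e₂)).resolve_right hne'
    have c₅ : c 5 = 0 := (mul_eq_zero.mp (show c 5 * _ = 0 by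
      linear_combination τ k b x * e₂ - τ k b' x * e₁)).resolve_right hne'
    simp only [c₄, c₅, zero_mul, zero_smul, add_zero] at e₃ e₄ e₅ hc
    have c₃ : c 3 = 0 := (mul_eq_zero.mp e₃).resolve_right ha
    simp only [c₃, zero_mul, zero_smul, add_zero] at e₄ e₅ hc
    have c₁ : c 1 = 0 := (mul_eq_zero.mp (show c 1 * _ = 0 by
      linear_combination τ k b' x * e₅ - τ k b' y * e₄)).resolve_right hne'
    have c₂ : c 2 = 0 := (mul_eq_zero.mp (show c 2 * _ = 0 by
      linear_combination τ k b y * e₄ - τ k b x * e₅)).resolve_right hne'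
    simp only [c₁, c₂, zero_smul, add_zero] at hc
    have c₀ : c 0 = 0 := (smul_eq_zero.mp hc).resolve_right hk
    intro i
    fin_cases i <;> assumption
  have := hli.fintype_card_le_finrank
  simp at this

/-- A nonzero symmetric bilinear form with vanishing `2 × 2` minors is a multiple of the square
of a linear functional. -/
lemma exists_eq_mul_functional {n : ℕ} (σ : (Fin n → ℂ) →ₗ[ℂ] (Fin n → ℂ) →ₗ[ℂ] ℂ)
    (hσ : ∀ y z, σ y z = σ z y) (h0 : σ ≠ 0)
    (hmin : ∀ m m' x y, σ (Pi.single m 1) x * σ (Pi.single m' 1) y =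
      σ (Pi.single m 1) y * σ (Pi.single m' 1) x) :
    ∃ (c : ℂ) (g : (Fin n → ℂ) →ₗ[ℂ] ℂ), c ≠ 0 ∧ g ≠ 0 ∧ ∀ y z, σ y z = c * g y * g z := by
  obtain ⟨m, hm⟩ : ∃ m, σ (Pi.single m 1) (Pi.single m 1) ≠ 0 := by
    by_contra! hd
    refine h0 (LinearMap.pi_ext' fun i => LinearMap.ext_ring
      (LinearMap.pi_ext' fun j => LinearMap.ext_ring ?_))
    have e := hmin i j (Pi.single i 1) (Pi.single j 1)
    rw [hd i, zero_mul, hσ (Pi.single j 1)] at e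
    simpa using e.symm
  refine ⟨(σ (Pi.single m 1) (Pi.single m 1))⁻¹, σ (Pi.single m 1), inv_ne_zero hm,
    fun h => hm (by simp [h]), fun y z => ?_⟩
  have key : σ.flip z =
      ((σ (Pi.single m 1) (Pi.single m 1))⁻¹ * σ (Pi.single m 1) z) • σ (Pi.single m 1) := by
    refine LinearMap.pi_ext' fun i => LinearMap.ext_ring ?_
    have e := hmin i m z (Pi.single m 1)
    rw [hσ (Pi.single i 1) (Pi.single m 1)] at e
    simp only [LinearMap.comp_apply, LinearMap.flip_apply, LinearMap.smul_apply, smul_eq_mul,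
      LinearMap.single_apply]
    field_simp
    linear_combination e
  have := LinearMap.congr_fun key y
  simp only [LinearMap.flip_apply, LinearMap.smul_apply, smul_eq_mul] at this
  rw [this]
  ring

/-- For generic `a`, some nonzero kernel vector of `τ a` has an associated form of rank one. -/
lemma exists_generic_rank_one_kernel
    (τ : (Fin 5 → ℂ) →ₗ[ℂ] (Fin 5 → ℂ) →ₗ[ℂ] (Fin 5 → ℂ) →ₗ[ℂ] ℂ)
    (h₁ : ∀ x y z, τ x y z = τ y x z) (h₂ : ∀ x y z, τ x y z = τ x z y)
    (hdeg : ∀ v, ∃ w, w ≠ 0 ∧ τ v w = 0)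
    (hcone : ∀ v, τ v = 0 → v = 0) (G : MvPolynomial (Fin 5) ℂ) (hG : G ≠ 0)
    (hGτ : ∀ a, eval a G ≠ 0 → τ a a a ≠ 0) :
    ∃ Q : MvPolynomial (Fin 5) ℂ, Q ≠ 0 ∧ ∀ a, eval a Q ≠ 0 →
      ∃ (k : Fin 5 → ℂ) (c : ℂ) (g : (Fin 5 → ℂ) →ₗ[ℂ] ℂ), c ≠ 0 ∧ g ≠ 0 ∧
        (∀ y z, τ k y z = c * g y * g z) ∧ g a = 0 ∧ τ k k = 0 := by
  obtain ⟨p, hp0, hp⟩ := exists_polynomial_kernel τ hdeg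
  obtain ⟨j, hj⟩ := Function.ne_iff.mp hp0
  refine ⟨p j * G, mul_ne_zero hj hG, fun a ha => ?_⟩
  rw [map_mul] at ha
  have hk : evalVec a p ≠ 0 := fun h => left_ne_zero_of_mul ha (congrFun h j)
  obtain ⟨hD, hiso⟩ := kernel_derivatives_isotropic τ h₁ h₂ p hp a
  obtain ⟨c, g, hc, hg, hcg⟩ := exists_eq_mul_functional (τ (evalVec a p))
    (h₂ _) (fun h => hk (hcone _ h)) fun m m' x y =>
      minor_eq_zero τ h₁ h₂ (hGτ a (right_ne_zero_of_mul ha)) hk (hp a)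
        (hD m) (hD m') (hiso _ _) (hiso _ _) (hiso _ _) x y
  refine ⟨evalVec a p, c, g, hc, hg, hcg, ?_, ?_⟩
  · have e := hcg a a
    rw [h₁, hp a, LinearMap.zero_apply] at e
    simpa [hc] using e
  · refine LinearMap.pi_ext' fun m => LinearMap.ext_ring ?_
    have e := hD m (evalVec a p)
    rw [h₂ a, hp a, h₂] at e
    simpa using e

/-- A symmetric trilinear form on `ℂ⁵`, degenerate in every direction but not itself degenerate,
vanishes identically on some `W × W × ℂ⁵` with `W` of dimension three. -/
lemma exists_singular_plane
    (τ : (Fin 5 → ℂ) →ₗ[ℂ] (Fin 5 → ℂ) →ₗ[ℂ] (Fin 5 → ℂ) →ₗ[ℂ] ℂ)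
    (h₁ : ∀ x y z, τ x y z = τ y x z) (h₂ : ∀ x y z, τ x y z = τ x z y)
    (hdeg : ∀ v, ∃ w, w ≠ 0 ∧ τ v w = 0)
    (hcone : ∀ v, τ v = 0 → v = 0) (G : MvPolynomial (Fin 5) ℂ) (hG : G ≠ 0)
    (hGτ : ∀ a, eval a G ≠ 0 → τ a a a ≠ 0) :
    ∃ W : Submodule ℂ (Fin 5 → ℂ), Module.finrank ℂ W = 3 ∧ ∀ x ∈ W, τ x x = 0 := by
  obtain ⟨Q, hQ, hQk⟩ := exists_generic_rank_one_kernel τ h₁ h₂ hdeg hcone G hG hGτ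
  have generic : ∀ P : MvPolynomial (Fin 5) ℂ, P ≠ 0 → ∃ a, eval a P ≠ 0 := fun P hP => by
    by_contra! h
    exact hP (MvPolynomial.funext fun a => by simpa using h a)
  obtain ⟨a₁, ha₁⟩ := generic Q hQ
  obtain ⟨k₁, c₁, g₁, hc₁, hg₁, hτ₁, -, hk₁⟩ := hQk a₁ ha₁
  obtain ⟨L₁, hL₁, hLg₁⟩ := exists_polynomial_of_functional g₁ hg₁
  obtain ⟨a₂, ha₂⟩ := generic (Q * L₁) (mul_ne_zero hQ hL₁)
  rw [map_mul, hLg₁, mul_ne_zero_iff] at ha₂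
  obtain ⟨k₂, c₂, g₂, hc₂, hg₂, hτ₂, hga₂, hk₂⟩ := hQk a₂ ha₂.1
  obtain ⟨L₂, hL₂, hLg₂⟩ := exists_polynomial_of_functional g₂ hg₂
  obtain ⟨a₃, ha₃⟩ := generic (Q * L₁ * L₂) (mul_ne_zero (mul_ne_zero hQ hL₁) hL₂)
  rw [map_mul, map_mul, hLg₁, hLg₂, mul_ne_zero_iff, mul_ne_zero_iff] at ha₃
  obtain ⟨k₃, c₃, g₃, hc₃, hg₃, hτ₃, hga₃, hk₃⟩ := hQk a₃ ha₃.1.1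
  have cross : ∀ {k k' a : Fin 5 → ℂ} {c c' : ℂ} {g g' : (Fin 5 → ℂ) →ₗ[ℂ] ℂ}, c ≠ 0 →
      (∀ y z, τ k y z = c * g y * g z) → (∀ y z, τ k' y z = c' * g' y * g' z) →
      g a ≠ 0 → g' a = 0 → τ k k' = 0 ∧ τ k' k = 0 := by
    intro k k' a c c' g g' hc hk hk' hga hga'
    have e := hk k' a
    rw [h₁, hk', hga', mul_zero] at e
    have hgk : g k' = 0 := by simpa [hc, hga] using e.symm
    have h : τ k k' = 0 := LinearMap.ext fun z => by simp [hk, hgk]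
    exact ⟨h, LinearMap.ext fun z => by rw [h₁, h]⟩
  have h12 := cross hc₁ hτ₁ hτ₂ ha₂.2 hga₂
  have h13 := cross hc₁ hτ₁ hτ₃ ha₃.1.2 hga₃
  have h23 := cross hc₂ hτ₂ hτ₃ ha₃.2 hga₃
  have hne₃ : k₃ ≠ 0 := by
    rintro rfl
    obtain ⟨z, hz⟩ : ∃ z, g₃ z ≠ 0 := by
      by_contra! h
      exact hg₃ (LinearMap.ext h)
    simpa [hc₃, hz] using hτ₃ z z
  have hli : LinearIndependent ℂ ![k₁, k₂, k₃] := by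
    rw [Fintype.linearIndependent_iff]
    intro c hc
    replace hc : c 0 • k₁ + c 1 • k₂ + c 2 • k₃ = 0 := by
      simpa [Fin.sum_univ_three] using hc
    have e := congrArg (fun v => τ v a₂ a₃) hc
    have e' := congrArg (fun v => τ v a₃ a₃) hc
    simp only [map_add, map_smul, map_zero, LinearMap.add_apply, LinearMap.smul_apply,
      LinearMap.zero_apply, smul_eq_mul, hτ₁, hτ₂, hτ₃, hga₂, hga₃, mul_zero, zero_mul,
      add_zero] at e e'
    have hc0 : c 0 = 0 := by simpa [hc₁, ha₂.2, ha₃.1.2] using e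
    have hc1 : c 1 = 0 := by simpa [hc0, hc₂, ha₃.2] using e'
    have hc2 : c 2 = 0 := by simpa [hc0, hc1, hne₃] using hc
    intro i
    fin_cases i <;> assumption
  refine ⟨Submodule.span ℂ (Set.range ![k₁, k₂, k₃]), ?_, fun x hx => ?_⟩
  · rw [finrank_span_eq_card hli, Fintype.card_fin]
  · obtain ⟨c, rfl⟩ := (Submodule.mem_span_range_iff_exists_fun ℂ).mp hx
    simp [Fin.sum_univ_three, hk₁, hk₂, hk₃, h12, h13, h23]

section PolarForm

variable {n : ℕ} (F : MvPolynomial (Fin n) ℂ)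

lemma pderiv_comm (i j : Fin n) (f : MvPolynomial (Fin n) ℂ) :
    pderiv i (pderiv j f) = pderiv j (pderiv i f) := by
  have h : (⁅pderiv i, pderiv j⁆ : Derivation ℂ (MvPolynomial (Fin n) ℂ)
      (MvPolynomial (Fin n) ℂ)) = 0 :=
    MvPolynomial.derivation_ext fun l => by
      rw [Derivation.commutator_apply]
      simp [pderiv_X, Pi.single_apply, apply_ite]
  have := DFunLike.congr_fun h f
  rwa [Derivation.commutator_apply, Derivation.zero_apply, sub_eq_zero] at this

/-- The third partial derivatives at the origin. -/
noncomputable def thirdDeriv (i j l : Fin n) : ℂ :=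
  constantCoeff (pderiv i (pderiv j (pderiv l F)))

/-- The symmetric trilinear form of third derivatives at the origin. -/
noncomputable def polarForm :
    (Fin n → ℂ) →ₗ[ℂ] (Fin n → ℂ) →ₗ[ℂ] (Fin n → ℂ) →ₗ[ℂ] ℂ :=
  ∑ i, ∑ j, ∑ l, thirdDeriv F i j l • (LinearMap.proj i).smulRight
    ((LinearMap.proj j).smulRight (LinearMap.proj l))

lemma polarForm_apply (x y z : Fin n → ℂ) :
    polarForm F x y z = ∑ i, ∑ j, ∑ l, thirdDeriv F i j l * (x i * (y j * z l)) := by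
  simp [polarForm]

lemma polarForm_swap_left (x y z : Fin n → ℂ) : polarForm F x y z = polarForm F y x z := by
  rw [polarForm_apply, polarForm_apply, Finset.sum_comm]
  refine Finset.sum_congr rfl fun j _ => Finset.sum_congr rfl fun i _ =>
    Finset.sum_congr rfl fun l _ => ?_
  rw [thirdDeriv, pderiv_comm, ← thirdDeriv]
  ring

lemma polarForm_swap_right (x y z : Fin n → ℂ) : polarForm F x y z = polarForm F x z y := by
  rw [polarForm_apply, polarForm_apply]
  refine Finset.sum_congr rfl fun i _ => ?_
  rw [Finset.sum_comm]
  refine Finset.sum_congr rfl fun l _ => Finset.sum_congr rfl fun j _ => ?_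
  rw [thirdDeriv, pderiv_comm j l, ← thirdDeriv]
  ring

variable {F}

lemma pderiv_pderiv_pderiv_eq_C (hF : F.IsHomogeneous 3) (i j l : Fin n) :
    pderiv i (pderiv j (pderiv l F)) = C (thirdDeriv F i j l) := by
  have h : (pderiv i (pderiv j (pderiv l F))).IsHomogeneous 0 := hF.pderiv.pderiv.pderiv
  rw [← totalDegree_zero_iff_isHomogeneous, totalDegree_eq_zero_iff_eq_C] at h
  exact h

lemma eval_euler {φ : MvPolynomial (Fin n) ℂ} {d : ℕ} (h : φ.IsHomogeneous d)
    (x : Fin n → ℂ) : ∑ i, x i * eval x (pderiv i φ) = d * eval x φ := by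
  simpa using congrArg (eval x) h.sum_X_mul_pderiv

lemma polarForm_self_self (hF : F.IsHomogeneous 3) (x z : Fin n → ℂ) :
    polarForm F x x z = 2 * ∑ l, z l * eval x (pderiv l F) := by
  rw [polarForm_swap_right, polarForm_swap_left, polarForm_apply, Finset.mul_sum]
  refine Finset.sum_congr rfl fun l _ => ?_
  have e := eval_euler (hF.pderiv (i := l)) x
  rw [mul_left_comm, ← Nat.cast_ofNat, ← e, Finset.mul_sum]
  refine Finset.sum_congr rfl fun i _ => ?_
  have e' := eval_euler ((hF.pderiv (i := l)).pderiv (i := i)) x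
  simp only [Nat.add_one_sub_one, Nat.cast_one, one_mul] at e'
  rw [← e', Finset.mul_sum, Finset.mul_sum]
  refine Finset.sum_congr rfl fun j _ => ?_
  rw [pderiv_comm i l, pderiv_comm j l, pderiv_comm j i, pderiv_pderiv_pderiv_eq_C hF, eval_C]
  ring

lemma polarForm_eq_zero_of_pderiv {v w : Fin n → ℂ}
    (h : ∑ j, w j • pderiv j (∑ i, v i • pderiv i F) = 0) : polarForm F v w = 0 := by
  refine LinearMap.pi_ext' fun l => LinearMap.ext_ring ?_
  have e := congrArg constantCoeff (congrArg (pderiv l) h)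
  simp only [map_sum, Derivation.map_smul, map_zero] at e
  simp only [smul_eq_C_mul, map_mul, map_sum, constantCoeff_C, Finset.mul_sum] at e
  rw [LinearMap.comp_apply, LinearMap.comp_apply, LinearMap.zero_apply,
    polarForm_swap_right, polarForm_swap_left, polarForm_swap_right, polarForm_apply, ← e,
    Finset.sum_eq_single l]
  · refine Finset.sum_congr rfl fun j _ => Finset.sum_congr rfl fun i _ => ?_
    simp only [LinearMap.single_apply, Pi.single_eq_same, thirdDeriv]
    ring
  · intro i _ hi
    simp [hi]
  · simp

end PolarForm

end VanishingHessian

open VanishingHessian in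
/-- (Lossen's classification.) A homogeneous cubic in 5 variables all of whose directional
derivatives are degenerate quadratic forms, and which is not a cone, is singular along a
projective plane, i.e. all its first partial derivatives vanish on a 3-dimensional linear
subspace `W ⊆ ℂ⁵`. -/
theorem stmt_4 (F : MvPolynomial (Fin 5) ℂ) (hF : F.IsHomogeneous 3)
    (hdeg : ∀ v : Fin 5 → ℂ, ∃ w : Fin 5 → ℂ, w ≠ 0 ∧
      ∑ j, w j • pderiv j (∑ i, v i • pderiv i F) = 0)
    (hnotcone : ¬ ∃ v : Fin 5 → ℂ, v ≠ 0 ∧ ∑ i, v i • pderiv i F = 0) :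
    ∃ W : Submodule ℂ (Fin 5 → ℂ), Module.finrank ℂ W = 3 ∧
      ∀ x ∈ W, ∀ i, MvPolynomial.eval x (pderiv i F) = 0 := by
  obtain ⟨W, hW, hτ⟩ := exists_singular_plane (polarForm F) (polarForm_swap_left F)
    (polarForm_swap_right F)
    (fun v => let ⟨w, hw, h⟩ := hdeg v; ⟨w, hw, polarForm_eq_zero_of_pderiv h⟩)
    (fun v hv => by
      by_contra hne
      refine hnotcone ⟨v, hne, MvPolynomial.funext fun x => ?_⟩
      have e := polarForm_self_self hF x v
      rw [polarForm_swap_right, polarForm_swap_left, hv] at e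
      simpa [smul_eval] using e)
    F (fun h => hnotcone ⟨1, one_ne_zero, by simp [h]⟩)
    (fun a ha h => by
      rw [polarForm_self_self hF, eval_euler hF] at h
      exact ha (by simpa using h))
  refine ⟨W, hW, fun x hx i => ?_⟩
  have e := polarForm_self_self hF x (Pi.single i 1)
  rw [hτ x hx] at e
  simpa [Pi.single_apply] using e
end

section
/- Let A, B, C be homogeneous linear forms in X₀, …, X₄ over ℂ whose restrictions to the subspace W = { x ∈ ℂ⁵ : x₀ = x₁ = 0 } are linearly independent, and set F = X₀²·A + X₁²·B + X₀X₁·C. Let q be a homogeneous quadratic polynomial in X₀, …, X₄ over ℂ such that for every μ ∈ ℂ and every v ∈ ℂ⁵ the quadric μ·q − ∂_v F is degenerate. Then q vanishes at every point of W. -/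
open MvPolynomial

theorem Matrix.det_fin_four_eq {R : Type*} [CommRing R] (M : Matrix (Fin 4) (Fin 4) R) :
    M.det =
      M 0 0 * (M 1 1 * M 2 2 * M 3 3 - M 1 1 * M 2 3 * M 3 2 - M 1 2 * M 2 1 * M 3 3
        + M 1 2 * M 2 3 * M 3 1 + M 1 3 * M 2 1 * M 3 2 - M 1 3 * M 2 2 * M 3 1)
      - M 0 1 * (M 1 0 * M 2 2 * M 3 3 - M 1 0 * M 2 3 * M 3 2 - M 1 2 * M 2 0 * M 3 3
        + M 1 2 * M 2 3 * M 3 0 + M 1 3 * M 2 0 * M 3 2 - M 1 3 * M 2 2 * M 3 0)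
      + M 0 2 * (M 1 0 * M 2 1 * M 3 3 - M 1 0 * M 2 3 * M 3 1 - M 1 1 * M 2 0 * M 3 3
        + M 1 1 * M 2 3 * M 3 0 + M 1 3 * M 2 0 * M 3 1 - M 1 3 * M 2 1 * M 3 0)
      - M 0 3 * (M 1 0 * M 2 1 * M 3 2 - M 1 0 * M 2 2 * M 3 1 - M 1 1 * M 2 0 * M 3 2
        + M 1 1 * M 2 2 * M 3 0 + M 1 2 * M 2 0 * M 3 1 - M 1 2 * M 2 1 * M 3 0) := by
  rw [Matrix.det_succ_row_zero]
  simp only [Fin.sum_univ_four, Matrix.det_fin_three, Matrix.submatrix_apply]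
  simp [Fin.succAbove, Fin.lt_def]
  ring

/-- The Hessian matrix, at `u`, of `y₀² y₂ + y₁² y₃ + y₀ y₁ y₄`. -/
def cubicHessian (u : Fin 5 → ℂ) : Matrix (Fin 5) (Fin 5) ℂ :=
  !![2 * u 2, u 4, 2 * u 0, 0, u 1;
     u 4, 2 * u 3, 0, 2 * u 1, u 0;
     2 * u 0, 0, 0, 0, 0;
     0, 2 * u 1, 0, 0, 0;
     u 1, u 0, 0, 0, 0]

set_option maxHeartbeats 4000000 in
/-- If every combination of a symmetric matrix `G` with the Hessians `cubicHessian u` is singular,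
then the lower right `3 × 3` block of `G` vanishes. -/
theorem lowerBlock_eq_zero (G : Matrix (Fin 5) (Fin 5) ℂ) (hG : G.IsSymm)
    (hdet : ∀ (μ : ℂ) (u : Fin 5 → ℂ), (μ • G - cubicHessian u).det = 0) :
    G 2 2 = 0 ∧ G 3 3 = 0 ∧ G 4 4 = 0 ∧ G 2 3 = 0 ∧ G 2 4 = 0 ∧ G 3 4 = 0 := by
  have expand : ∀ μ a b x y : ℂ, (μ • G - cubicHessian ![x, y, a, b, 0]).det = 0 :=
    fun μ a b x y => hdet μ _
  simp only [Matrix.det_succ_row_zero (n := 4), Matrix.det_fin_four_eq, Fin.sum_univ_five,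
    Matrix.submatrix_apply] at expand
  simp [cubicHessian, Fin.succAbove, Fin.lt_def, hG.apply 0 1, hG.apply 0 2, hG.apply 0 3,
    hG.apply 0 4, hG.apply 1 2, hG.apply 1 3, hG.apply 1 4, hG.apply 2 3, hG.apply 2 4,
    hG.apply 3 4] at expand
  have conic : ∀ x y : ℂ, y ^ 4 * G 2 2 + x ^ 4 * G 3 3 + 4 * x ^ 2 * y ^ 2 * G 4 4
      + 2 * x ^ 2 * y ^ 2 * G 2 3 - 4 * x * y ^ 3 * G 2 4 - 4 * x ^ 3 * y * G 3 4 = 0 := by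
    intro x y
    linear_combination (3 / 16) * (expand 1 0 0 x y - expand (-1) 0 0 x y)
      - (3 / 80) * (expand 2 0 0 x y - expand (-2) 0 0 x y)
      + (1 / 240) * (expand 3 0 0 x y - expand (-3) 0 0 x y)
  have block : G 2 2 * G 3 3 * G 4 4 - G 2 2 * G 3 4 ^ 2 - G 2 3 ^ 2 * G 4 4
      + 2 * G 2 3 * G 3 4 * G 2 4 - G 2 4 ^ 2 * G 3 3 = 0 := by
    linear_combination (1 / 4) * (expand 1 1 1 0 0 - expand 1 1 0 0 0 - expand 1 0 1 0 0
      + expand 1 0 0 0 0)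
  have h22 : G 2 2 = 0 := by linear_combination conic 0 1
  have h33 : G 3 3 = 0 := by linear_combination conic 1 0
  have h24 : G 2 4 = 0 := by
    linear_combination (1 / 24) * (conic 1 1 - conic 1 (-1))
      - (1 / 48) * (conic 1 2 - conic 1 (-2))
  have h34 : G 3 4 = 0 := by
    linear_combination (-(1 / 8)) * (conic 1 1 - conic 1 (-1)) - h24
  have h23 : G 2 3 = -2 * G 4 4 := by
    linear_combination (1 / 2) * conic 1 1 - (1 / 2) * h22 - (1 / 2) * h33 + 2 * h24 + 2 * h34
  have h44 : G 4 4 = 0 := by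
    simpa [h22, h33, h24, h34, h23] using block
  exact ⟨h22, h33, h44, by simp [h23, h44], h24, h34⟩

theorem pderiv_pderiv_pderiv_mul {σ R : Type*} [CommRing R] {L M N : MvPolynomial σ R}
    {l m n : σ → R} (hL : ∀ i, pderiv i L = C (l i)) (hM : ∀ i, pderiv i M = C (m i))
    (hN : ∀ i, pderiv i N = C (n i)) (i j k : σ) :
    pderiv k (pderiv j (pderiv i (L * M * N))) =
      C (l i * m j * n k + l i * m k * n j + l j * m i * n k + l j * m k * n i
        + l k * m i * n j + l k * m j * n i) := by
  simp only [Derivation.leibniz, map_add, hL, hM, hN, smul_eq_mul, pderiv_C, map_mul,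
    map_zero]
  ring

theorem exists_pderiv_eq_C {σ R : Type*} [CommRing R] {L : MvPolynomial σ R}
    (hL : L.IsHomogeneous 1) : ∃ l : σ → R, ∀ i, pderiv i L = C (l i) :=
  ⟨fun i => coeff 0 (pderiv i L), fun _ => totalDegree_eq_zero_iff_eq_C.mp
    ((totalDegree_zero_iff_isHomogeneous _).mpr hL.pderiv)⟩

theorem eval_eq_sum_of_pderiv_eq_C {σ R : Type*} [Fintype σ] [CommRing R] {L : MvPolynomial σ R}
    {l : σ → R} (hL : L.IsHomogeneous 1) (hl : ∀ i, pderiv i L = C (l i)) (x : σ → R) :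
    eval x L = ∑ i, l i * x i := by
  have h := congrArg (eval x) hL.sum_X_mul_pderiv
  simp only [hl, map_sum, map_mul, eval_X, eval_C, one_smul] at h
  rw [← h]
  exact Finset.sum_congr rfl fun i _ => mul_comm _ _

/-- The matrix whose rows are the coefficients of `X₀`, `X₁` and three further linear forms. -/
def coordMatrix (a b c : Fin 5 → ℂ) : Matrix (Fin 5) (Fin 5) ℂ :=
  Matrix.of ![Pi.single 0 1, Pi.single 1 1, a, b, c]

theorem coordMatrix_det_ne_zero {a b c : Fin 5 → ℂ}
    (hindep : ∀ r s t : ℂ, (∀ x : Fin 5 → ℂ, x 0 = 0 → x 1 = 0 →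
      r * ∑ i, a i * x i + s * ∑ i, b i * x i + t * ∑ i, c i * x i = 0) →
      r = 0 ∧ s = 0 ∧ t = 0) : (coordMatrix a b c).det ≠ 0 := by
  intro hdet
  obtain ⟨z, hz, hzP⟩ := Matrix.exists_vecMul_eq_zero_iff.mpr hdet
  have hcol (i : Fin 5) : z 0 * (Pi.single 0 1 : Fin 5 → ℂ) i
      + z 1 * (Pi.single 1 1 : Fin 5 → ℂ) i + z 2 * a i + z 3 * b i + z 4 * c i = 0 := by
    have e := congrFun hzP i
    simp only [Matrix.vecMul, dotProduct, Fin.sum_univ_five] at e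
    exact e
  obtain ⟨h2, h3, h4⟩ := hindep (z 2) (z 3) (z 4) fun x hx0 hx1 => by
    have e2 := hcol 2
    have e3 := hcol 3
    have e4 := hcol 4
    simp at e2 e3 e4
    simp only [Fin.sum_univ_five, hx0, hx1]
    linear_combination x 2 * e2 + x 3 * e3 + x 4 * e4
  have h0 : z 0 = 0 := by simpa [h2, h3, h4] using hcol 0
  have h1 : z 1 = 0 := by simpa [h2, h3, h4] using hcol 1
  apply hz
  ext i
  fin_cases i <;> assumption

theorem pderiv_X_eq_C_single {σ R : Type*} [DecidableEq σ] [CommRing R] (m i : σ) :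
    pderiv i (X m : MvPolynomial σ R) = C ((Pi.single m 1 : σ → R) i) := by
  rw [pderiv_X]
  by_cases h : i = m
  · subst h; simp
  · simp [h]

theorem pderiv_comm_apply {σ R : Type*} [CommRing R] (i j : σ) (p : MvPolynomial σ R) :
    pderiv i (pderiv j p) = pderiv j (pderiv i p) := by
  classical
  have h : ⁅pderiv i, pderiv j⁆ = (0 : Derivation R (MvPolynomial σ R) (MvPolynomial σ R)) :=
    derivation_ext fun m => by
      rw [Derivation.commutator_apply]
      simp only [pderiv_X_eq_C_single, pderiv_C, sub_zero, Derivation.zero_apply]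
  rw [← sub_eq_zero, ← Derivation.commutator_apply, h, Derivation.zero_apply]

/-- The second derivatives of `∂_v (X₀² A + X₁² B + X₀ X₁ L)`. -/
theorem pderiv_pderiv_directional_cubic {A B L : MvPolynomial (Fin 5) ℂ} {a b c : Fin 5 → ℂ}
    (ha : ∀ i, pderiv i A = C (a i)) (hb : ∀ i, pderiv i B = C (b i))
    (hc : ∀ i, pderiv i L = C (c i)) (v : Fin 5 → ℂ) (j k : Fin 5) :
    pderiv k (pderiv j (∑ i, v i • pderiv i (X 0 ^ 2 * A + X 1 ^ 2 * B + X 0 * X 1 * L))) =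
      C (((coordMatrix a b c).transpose * cubicHessian ((coordMatrix a b c).mulVec v)
        * coordMatrix a b c) k j) := by
  have hX (m i : Fin 5) := pderiv_X_eq_C_single (R := ℂ) m i
  simp only [map_sum (pderiv _), Derivation.map_smul, map_add (pderiv _), sq,
    pderiv_pderiv_pderiv_mul (hX _) (hX _) ha,
    pderiv_pderiv_pderiv_mul (hX _) (hX _) hb, pderiv_pderiv_pderiv_mul (hX _) (hX _) hc]
  simp only [smul_eq_C_mul, ← C_add, ← C_mul, ← map_sum C]
  congr 1
  have h0 : coordMatrix a b c 0 = Pi.single 0 1 := rfl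
  have h1 : coordMatrix a b c 1 = Pi.single 1 1 := rfl
  have h2 : coordMatrix a b c 2 = a := rfl
  have h3 : coordMatrix a b c 3 = b := rfl
  have h4 : coordMatrix a b c 4 = c := rfl
  have hv (m : Fin 5) :
      (coordMatrix a b c).mulVec v m = ∑ i, coordMatrix a b c m i * v i := rfl
  simp only [Matrix.mul_apply, Matrix.transpose_apply, cubicHessian, Matrix.of_apply,
    Matrix.cons_val, hv, Fin.sum_univ_five, h0, h1, h2, h3, h4]
  generalize (Pi.single 0 1 : Fin 5 → ℂ) = e₀
  generalize (Pi.single 1 1 : Fin 5 → ℂ) = e₁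
  ring

/-- (Key step in the proof of Proposition on dimension 10, part (ii).) Let
`F = X₀²·A + X₁²·B + X₀X₁·C` with `A, B, C` linear forms whose restrictions to
`W = {x₀ = x₁ = 0}` are linearly independent. If `q` is a quadratic form such that
`μ·q - ∂_v F` is degenerate for all `μ ∈ ℂ` and all `v ∈ ℂ⁵`, then `q` vanishes on `W`. -/
theorem stmt_8 (A B C : MvPolynomial (Fin 5) ℂ)
    (hA : A.IsHomogeneous 1) (hB : B.IsHomogeneous 1) (hC : C.IsHomogeneous 1)
    (hindep : ∀ a b c : ℂ,
      (∀ x : Fin 5 → ℂ, x 0 = 0 → x 1 = 0 →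
        a * MvPolynomial.eval x A + b * MvPolynomial.eval x B + c * MvPolynomial.eval x C = 0) →
      a = 0 ∧ b = 0 ∧ c = 0)
    (q : MvPolynomial (Fin 5) ℂ) (hq : q.IsHomogeneous 2)
    (hdeg : ∀ μ : ℂ, ∀ v : Fin 5 → ℂ, ∃ w : Fin 5 → ℂ, w ≠ 0 ∧
      ∑ j, w j • pderiv j
        (μ • q - ∑ i, v i • pderiv i (X 0 ^ 2 * A + X 1 ^ 2 * B + X 0 * X 1 * C)) = 0) :
    ∀ x : Fin 5 → ℂ, x 0 = 0 → x 1 = 0 → MvPolynomial.eval x q = 0 := by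
  obtain ⟨a, ha⟩ := exists_pderiv_eq_C hA
  obtain ⟨b, hb⟩ := exists_pderiv_eq_C hB
  obtain ⟨c, hc⟩ := exists_pderiv_eq_C hC
  choose h hh using fun j => exists_pderiv_eq_C (hq.pderiv (i := j))
  have hsymm (j k : Fin 5) : h j k = h k j := by
    apply MvPolynomial.C_injective (Fin 5) ℂ
    rw [← hh, ← hh]
    exact pderiv_comm_apply ..
  have hq_eval (x : Fin 5 → ℂ) : 2 * eval x q = ∑ j, x j * ∑ k, h j k * x k := by
    have e := congrArg (eval x) hq.sum_X_mul_pderiv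
    simp only [map_sum, map_mul, eval_X, nsmul_eq_mul, map_natCast] at e
    rw [← Nat.cast_ofNat, ← e]
    exact Finset.sum_congr rfl fun j _ => by
      rw [eval_eq_sum_of_pderiv_eq_C hq.pderiv (hh j)]
  let H : Matrix (Fin 5) (Fin 5) ℂ := Matrix.of h
  set P := coordMatrix a b c with hPdef
  have hP : P.det ≠ 0 := coordMatrix_det_ne_zero fun r s t hrst => hindep r s t fun x hx0 hx1 => by
    rw [eval_eq_sum_of_pderiv_eq_C hA ha, eval_eq_sum_of_pderiv_eq_C hB hb,
      eval_eq_sum_of_pderiv_eq_C hC hc]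
    exact hrst x hx0 hx1
  have hPu : IsUnit P.det := isUnit_iff_ne_zero.mpr hP
  let G : Matrix (Fin 5) (Fin 5) ℂ := P⁻¹.transpose * H * P⁻¹
  have hHG : H = P.transpose * G * P := by
    have e : P.transpose * P⁻¹.transpose = 1 := by
      rw [← Matrix.transpose_mul, Matrix.nonsing_inv_mul _ hPu, Matrix.transpose_one]
    calc H = (P.transpose * P⁻¹.transpose) * H * (P⁻¹ * P) := by
          rw [e, Matrix.nonsing_inv_mul _ hPu, one_mul, mul_one]
      _ = _ := by simp only [G, mul_assoc]
  have hGsymm : G.IsSymm := by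
    have : H.transpose = H := Matrix.ext fun i j => hsymm j i
    simp [Matrix.IsSymm, G, Matrix.transpose_mul, this, mul_assoc]
  have hGdet (μ : ℂ) (u : Fin 5 → ℂ) : (μ • G - cubicHessian u).det = 0 := by
    obtain ⟨w, hw, hw0⟩ := hdeg μ (P⁻¹.mulVec u)
    have hPu' : P.mulVec (P⁻¹.mulVec u) = u := by
      rw [Matrix.mulVec_mulVec, Matrix.mul_nonsing_inv _ hPu, Matrix.one_mulVec]
    have hker : (P.transpose * (μ • G - cubicHessian u) * P).mulVec w = 0 := by
      have e1 : P.transpose * (μ • G - cubicHessian u) * P =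
          μ • H - P.transpose * cubicHessian u * P := by
        rw [hHG]; simp [mul_sub, sub_mul]
      rw [e1]
      ext k
      have e := congrArg (pderiv k) hw0
      have hterm (j : Fin 5) : pderiv k (w j • pderiv j (μ • q - ∑ i, P⁻¹.mulVec u i •
          pderiv i (X 0 ^ 2 * A + X 1 ^ 2 * B + X 0 * X 1 * C))) = MvPolynomial.C
          (w j * (μ * h j k - (P.transpose * cubicHessian u * P) k j)) := by
        rw [Derivation.map_smul, map_sub, map_sub, Derivation.map_smul, Derivation.map_smul, hh,
          pderiv_pderiv_directional_cubic ha hb hc, ← hPdef, hPu']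
        simp only [smul_eq_C_mul, C_mul, C_sub]
      rw [map_sum, Finset.sum_congr rfl fun j _ => hterm j, ← map_sum MvPolynomial.C] at e
      apply MvPolynomial.C_injective (Fin 5) ℂ
      rw [Pi.zero_apply, map_zero, ← map_zero (pderiv k), ← e]
      congr 1
      simp only [Matrix.mulVec, dotProduct, Matrix.sub_apply, Matrix.smul_apply, H,
        Matrix.of_apply, smul_eq_mul]
      exact Finset.sum_congr rfl fun j _ => by rw [hsymm k j]; ring
    have hd := Matrix.exists_mulVec_eq_zero_iff.mp ⟨w, hw, hker⟩
    simpa [Matrix.det_mul, hP] using hd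
  obtain ⟨h22, h33, h44, h23, h24, h34⟩ := lowerBlock_eq_zero G hGsymm hGdet
  intro x hx0 hx1
  have hform : 2 * eval x q = P.mulVec x ⬝ᵥ G.mulVec (P.mulVec x) := by
    have e : 2 * eval x q = x ⬝ᵥ H.mulVec x := hq_eval x
    rw [e, hHG, ← Matrix.mulVec_mulVec, ← Matrix.mulVec_mulVec, Matrix.mulVec_transpose,
      dotProduct_comm, ← Matrix.dotProduct_mulVec, dotProduct_comm]
  have hy0 : P.mulVec x 0 = 0 := by simp [P, coordMatrix, Matrix.mulVec, hx0]
  have hy1 : P.mulVec x 1 = 0 := by simp [P, coordMatrix, Matrix.mulVec, hx1]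
  generalize P.mulVec x = y at hform hy0 hy1
  have : 2 * eval x q = 0 := by
    rw [hform]
    simp [dotProduct, Matrix.mulVec, Fin.sum_univ_five, hy0, hy1, h22, h33, h44, h23, h24, h34,
      hGsymm.apply 2 3, hGsymm.apply 2 4, hGsymm.apply 3 4]
  simpa using this
end

section
/- Let V ⊆ ℂ^n be an open set and let f, f₁, …, f_{2n} : V → ℂ be holomorphic functions such that at every point b ∈ V the complex differentials df₁(b), …, df_{2n}(b) are linearly independent over ℝ (as real-linear functionals on ℂ^n), and let a = (a₁, …, a_{2n}) : V → ℝ^{2n} be the unique map with real values such that df(b) = Σᵢ aᵢ(b)·dfᵢ(b) for every b ∈ V. Assume the real derivative da_b has constant rank r at every b ∈ V. Then the fibers of a are affine in the coordinates xᵢ = Re fᵢ: for every c ∈ ℝ^{2n} and every connected component F of a^{-1}(c), there exist a surjective linear map L : ℝ^{2n} → ℝ^r and a point c′ ∈ ℝ^r such that L(Re f₁(p), …, Re f_{2n}(p)) = c′ for every p ∈ F. -/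
open Metric Set Filter Topology

/-- Cauchy estimate: the derivative of a holomorphic function is bounded on a smaller ball. -/
theorem exists_norm_fderiv_le_of_differentiableOn_closedBall
    {E : Type*} [NormedAddCommGroup E] [NormedSpace ℂ E] [FiniteDimensional ℂ E]
    {f : E → ℂ} {z : E} {R : ℝ} (hR : 0 < R) (hf : DifferentiableOn ℂ f (closedBall z (3 * R))) :
    ∃ C, ∀ w ∈ closedBall z (2 * R), ‖fderiv ℂ f w‖ ≤ C := by
  have : ProperSpace E := FiniteDimensional.proper ℂ E
  obtain ⟨B, hB⟩ := (isCompact_closedBall z (3 * R)).exists_bound_of_continuousOn hf.continuousOn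
  refine ⟨(2 * B) / R, fun w hw => ?_⟩
  have hsub : ball w R ⊆ closedBall z (3 * R) := fun y hy => by
    have := dist_triangle y w z
    rw [mem_ball] at hy
    rw [mem_closedBall] at hw ⊢
    linarith
  refine Complex.norm_fderiv_le_div_of_mapsTo_ball (hf.mono hsub) (fun y hy => ?_) hR
  rw [mem_closedBall, dist_eq_norm]
  have h1 := hB y (hsub hy)
  have h2 := hB w (hsub (mem_ball_self hR))
  have h3 := norm_sub_le (f y) (f w)
  linarith

/-- Directional derivatives of a holomorphic function of several variables are holomorphic. -/
theorem DifferentiableOn.fderiv_apply_const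
    {E : Type*} [NormedAddCommGroup E] [NormedSpace ℂ E] [FiniteDimensional ℂ E]
    {f : E → ℂ} {U : Set E} (hf : DifferentiableOn ℂ f U) (hU : IsOpen U) (v : E) :
    DifferentiableOn ℂ (fun z => fderiv ℂ f z v) U := by
  intro z hz
  refine DifferentiableAt.differentiableWithinAt ?_
  have : ProperSpace E := FiniteDimensional.proper ℂ E
  have : ProperSpace (E →L[ℂ] ℂ) := FiniteDimensional.proper ℂ _
  borelize E
  obtain ⟨R, hR, hRU⟩ : ∃ R > 0, closedBall z (3 * R) ⊆ U := by
    obtain ⟨ε, hε, h⟩ := nhds_basis_closedBall.mem_iff.1 (hU.mem_nhds hz)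
    exact ⟨ε / 3, by positivity, by rwa [mul_div_cancel₀ _ (by norm_num)]⟩
  obtain ⟨C, hC⟩ := exists_norm_fderiv_le_of_differentiableOn_closedBall hR (hf.mono hRU)
  obtain ⟨ρ, hρ, hρv⟩ : ∃ ρ > 0, ρ * ‖v‖ ≤ R :=
    ⟨R / (‖v‖ + 1), by positivity, by
      rw [div_mul_eq_mul_div, div_le_iff₀ (by positivity)]
      nlinarith [norm_nonneg v]⟩
  have hmem : ∀ x ∈ ball z R, ∀ t ∈ closedBall (0 : ℂ) ρ, x + t • v ∈ closedBall z (2 * R) := by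
    intro x hx t ht
    rw [mem_ball, dist_eq_norm] at hx
    rw [mem_closedBall, dist_eq_norm] at ht ⊢
    have h1 : ‖x + t • v - z‖ ≤ ‖x - z‖ + ‖t‖ * ‖v‖ := by
      rw [← norm_smul, add_sub_right_comm]; exact norm_add_le _ _
    have h2 : ‖t‖ * ‖v‖ ≤ ρ * ‖v‖ := by gcongr; simpa using ht
    linarith
  have hdiff : ∀ w ∈ closedBall z (2 * R), DifferentiableAt ℂ f w := fun w hw =>
    (hf w (hRU (closedBall_subset_closedBall (by linarith) hw))).differentiableAt
      (hU.mem_nhds (hRU (closedBall_subset_closedBall (by linarith) hw)))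
  have hderiv : ∀ x ∈ ball z R, ∀ t ∈ closedBall (0 : ℂ) ρ,
      HasDerivAt (fun t : ℂ => f (x + t • v)) (fderiv ℂ f (x + t • v) v) t := by
    intro x hx t ht
    have h1 : HasDerivAt (fun t : ℂ => x + t • v) v t := by
      simpa using ((hasDerivAt_id t).smul_const v).const_add x
    exact (hdiff _ (hmem x hx t ht)).hasFDerivAt.comp_hasDerivAt t h1
  have hcircle : ∀ θ, circleMap 0 ρ θ ∈ closedBall (0 : ℂ) ρ := fun θ =>
    circleMap_mem_closedBall _ hρ.le θ
  let k : ℝ → ℂ := fun θ => _root_.deriv (circleMap 0 ρ) θ * (1 / (circleMap 0 ρ θ - 0) ^ 2)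
  have hk : Continuous k := by
    have : ∀ θ, circleMap 0 ρ θ - 0 ≠ 0 := fun θ => by
      simpa using hρ.ne'
    simp only [k, deriv_circleMap]
    refine Continuous.mul (by fun_prop) (Continuous.div (by fun_prop) (by fun_prop) ?_)
    exact fun θ => pow_ne_zero _ (this θ)
  have hfc : ∀ x ∈ ball z R, Continuous fun θ => f (x + circleMap 0 ρ θ • v) := by
    intro x hx
    refine continuous_iff_continuousAt.2 fun θ => ?_
    exact ((hdiff _ (hmem x hx _ (hcircle θ))).continuousAt).comp
      (f := fun θ => x + circleMap 0 ρ θ • v) (by fun_prop)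
  have hint : HasFDerivAt (fun x => ∫ θ in (0)..(2 * Real.pi), k θ • f (x + circleMap 0 ρ θ • v))
      (∫ θ in (0)..(2 * Real.pi), k θ • fderiv ℂ f (z + circleMap 0 ρ θ • v)) z := by
    refine intervalIntegral.hasFDerivAt_integral_of_dominated_of_fderiv_le (𝕜 := ℂ)
      (bound := fun θ => ‖k θ‖ * C)
      (F' := fun x θ => k θ • fderiv ℂ f (x + circleMap 0 ρ θ • v))
      (ball_mem_nhds z hR) ?_ ?_ ?_ ?_ ?_ ?_
    · filter_upwards [ball_mem_nhds z hR] with x hx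
      exact (hk.smul (hfc x hx)).aestronglyMeasurable
    · exact (hk.smul (hfc z (mem_ball_self hR))).intervalIntegrable _ _
    · refine hk.aestronglyMeasurable.smul ?_
      refine Measurable.aestronglyMeasurable ?_
      exact (measurable_fderiv ℂ f).comp (by fun_prop)
    · refine .of_forall fun θ _ x hx => ?_
      rw [norm_smul]
      gcongr
      exact hC _ (hmem x hx _ (hcircle θ))
    · exact (hk.norm.mul continuous_const).intervalIntegrable _ _
    · refine .of_forall fun θ _ x hx => ?_
      refine HasFDerivAt.fun_const_smul ?_ _
      exact (hasFDerivAt_comp_add_right _).2 (hdiff _ (hmem x hx _ (hcircle θ))).hasFDerivAt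
  refine (hint.differentiableAt.const_mul (2 * Real.pi * Complex.I)⁻¹).congr_of_eventuallyEq ?_
  filter_upwards [ball_mem_nhds z hR] with x hx
  have h1 := DifferentiableOn.deriv_eq_smul_circleIntegral (f := fun t : ℂ => f (x + t • v)) (c := 0)
    hρ (fun t ht => (hderiv x hx t ht).differentiableAt.differentiableWithinAt)
  rw [(hderiv x hx 0 (by simpa using hρ.le)).deriv, zero_smul, add_zero] at h1
  rw [eq_inv_mul_iff_mul_eq₀ (by simp [Real.pi_ne_zero]), ← smul_eq_mul, ← h1]
  simp only [circleIntegral, k, smul_eq_mul, mul_assoc]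

/-- A holomorphic function of several variables is smooth. -/
theorem DifferentiableOn.contDiffOn_of_finiteDimensional
    {E : Type*} [NormedAddCommGroup E] [NormedSpace ℂ E] [FiniteDimensional ℂ E]
    {f : E → ℂ} {U : Set E} (hf : DifferentiableOn ℂ f U) (hU : IsOpen U) (k : ℕ) :
    ContDiffOn ℂ k f U := by
  induction k generalizing f with
  | zero => exact contDiffOn_zero.2 hf.continuousOn
  | succ k ih =>
    push_cast
    rw [contDiffOn_succ_iff_fderiv_apply hU.uniqueDiffOn]
    refine ⟨hf, by simp, fun v => ?_⟩
    refine (ih (hf.fderiv_apply_const hU v)).congr fun x hx => ?_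
    rw [fderivWithin_of_isOpen hU hx]

/-- A local form of the constant rank theorem: if `a` has constant rank, then near `p`, along the
fiber of `a` through `p`, the range of the derivative of `a` is constant, and so is every function
`Y` whose derivative vanishes on the kernel of the derivative of `a`. -/
theorem eventually_range_fderiv_eq_and_eq_of_finrank_range_fderiv_eq
    {E G H : Type*} [NormedAddCommGroup E] [NormedSpace ℝ E] [FiniteDimensional ℝ E]
    [NormedAddCommGroup G] [NormedSpace ℝ G] [FiniteDimensional ℝ G]
    [NormedAddCommGroup H] [NormedSpace ℝ H]
    {a : E → G} {V : Set E} {r : ℕ} (hV : IsOpen V) (ha : ContDiffOn ℝ 1 a V)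
    (hrank : ∀ b ∈ V, Module.finrank ℝ (LinearMap.range (fderiv ℝ a b).toLinearMap) = r)
    {p : E} (hp : p ∈ V) :
    ∀ᶠ q in 𝓝 p, a q = a p →
      LinearMap.range (fderiv ℝ a q).toLinearMap = LinearMap.range (fderiv ℝ a p).toLinearMap ∧
      ∀ Y : E → H, DifferentiableOn ℝ Y V →
        (∀ x ∈ V, LinearMap.range (fderiv ℝ a x).toLinearMap =
          LinearMap.range (fderiv ℝ a p).toLinearMap →
          ∀ u, fderiv ℝ a x u = 0 → fderiv ℝ Y x u = 0) →
        Y q = Y p := by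
  have := FiniteDimensional.complete ℝ E
  have hdiff : ∀ x ∈ V, DifferentiableAt ℝ a x := fun x hx =>
    (ha.contDiffAt (hV.mem_nhds hx)).differentiableAt (by simp)
  set D := fderiv ℝ a p with hD
  set W := LinearMap.range D.toLinearMap with hW
  set K := LinearMap.ker D.toLinearMap with hK
  obtain ⟨P, hP⟩ := Submodule.ClosedComplemented.of_finiteDimensional W
  obtain ⟨Q, hQ⟩ := Submodule.ClosedComplemented.of_finiteDimensional K
  let Φ : E → W × K := fun x => (P (a x), Q x)
  have hΦc : ContDiffAt ℝ 1 Φ p :=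
    (P.contDiff.contDiffAt.comp p (ha.contDiffAt (hV.mem_nhds hp))).prodMk Q.contDiff.contDiffAt
  let T : E →L[ℝ] W × K := (P.comp D).prod Q
  have hT : HasFDerivAt Φ T p :=
    (P.hasFDerivAt.comp p (hdiff p hp).hasFDerivAt).prodMk Q.hasFDerivAt
  have hTinj : Function.Injective T := by
    refine (injective_iff_map_eq_zero T).2 fun u hu => ?_
    have h1 : P (D u) = 0 := congrArg Prod.fst hu
    have h2 : Q u = 0 := congrArg Prod.snd hu
    have h3 := hP ⟨D u, u, rfl⟩
    rw [h1] at h3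
    have h4 : D u = 0 := congrArg Subtype.val h3.symm
    have h5 := hQ ⟨u, h4⟩
    rw [h2] at h5
    exact congrArg Subtype.val h5.symm
  have hdim : Module.finrank ℝ E = Module.finrank ℝ (W × K) := by
    rw [Module.finrank_prod, hW, hK, LinearMap.finrank_range_add_finrank_ker]
  let e : E ≃L[ℝ] W × K :=
    (LinearEquiv.ofInjectiveOfFinrankEq T.toLinearMap hTinj hdim).toContinuousLinearEquiv
  have he : HasFDerivAt Φ (e : E →L[ℝ] W × K) p := hT
  have hstrict := hΦc.hasStrictFDerivAt' he one_ne_zero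
  let Ψ := hΦc.localInverse he one_ne_zero
  have hΨp : Ψ (Φ p) = p := hΦc.localInverse_apply_image he one_ne_zero
  have hΨc : ContDiffAt ℝ 1 Ψ (Φ p) := hΦc.to_localInverse he one_ne_zero
  have hleft : ∀ᶠ x in 𝓝 p, Ψ (Φ x) = x := hstrict.eventually_left_inverse
  have hright : ∀ᶠ y in 𝓝 (Φ p), Φ (Ψ y) = y := hstrict.eventually_right_inverse
  have hΨV : ∀ᶠ y in 𝓝 (Φ p), Ψ y ∈ V := by
    refine hΨc.continuousAt.eventually_mem ?_
    rw [hΨp]; exact hV.mem_nhds hp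
  have hΨd : ∀ᶠ y in 𝓝 (Φ p), DifferentiableAt ℝ Ψ y :=
    (hΨc.eventually (by simp)).mono fun y hy => hy.differentiableAt (by simp)
  obtain ⟨ε, hε, hball⟩ := Metric.eventually_nhds_iff_ball.1 (hright.and (hΨV.and hΨd))
  let A : W × K → G := a ∘ Ψ
  have hAd : ∀ y ∈ ball (Φ p) ε, HasFDerivAt A ((fderiv ℝ a (Ψ y)).comp (fderiv ℝ Ψ y)) y :=
    fun y hy => (hdiff _ (hball y hy).2.1).hasFDerivAt.comp y (hball y hy).2.2.hasFDerivAt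
  have hPA : ∀ y ∈ ball (Φ p) ε, ∀ u, P (fderiv ℝ A y u) = u.1 := by
    intro y hy u
    have h1 : HasFDerivAt (fun y => P (A y)) (P.comp (fderiv ℝ A y)) y :=
      P.hasFDerivAt.comp y (hAd y hy).differentiableAt.hasFDerivAt
    have h2 : (fun y => P (A y)) =ᶠ[𝓝 y] Prod.fst := by
      filter_upwards [isOpen_ball.mem_nhds hy] with y' hy'
      exact congrArg Prod.fst (hball y' hy').1
    have h3 := (h1.congr_of_eventuallyEq h2.symm).unique hasFDerivAt_fst
    exact congrArg (fun l : W × K →L[ℝ] W => l u) h3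
  have hrange : ∀ y ∈ ball (Φ p) ε, LinearMap.range (fderiv ℝ A y).toLinearMap =
      LinearMap.range (fderiv ℝ a (Ψ y)).toLinearMap := by
    intro y hy
    refine Submodule.eq_of_le_of_finrank_le ?_ ?_
    · rintro _ ⟨u, rfl⟩
      rw [(hAd y hy).fderiv]
      exact ⟨_, rfl⟩
    · rw [hrank _ (hball y hy).2.1, ← hrank p hp]
      refine (LinearMap.finrank_le_finrank_of_surjective
        (f := P.toLinearMap.domRestrict (LinearMap.range (fderiv ℝ A y).toLinearMap)) ?_)
      intro w
      exact ⟨⟨_, (w, 0), rfl⟩, hPA y hy (w, 0)⟩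
  have hker : ∀ y ∈ ball (Φ p) ε, ∀ k, fderiv ℝ A y (0, k) = 0 := by
    intro y hy k
    let S := P.toLinearMap.domRestrict (LinearMap.range (fderiv ℝ A y).toLinearMap)
    have hS : Function.Surjective S := fun w => ⟨⟨_, (w, 0), rfl⟩, hPA y hy (w, 0)⟩
    have hSi : Function.Injective S := by
      refine (LinearMap.injective_iff_surjective_of_finrank_eq_finrank ?_).2 hS
      rw [hrange y hy, hrank _ (hball y hy).2.1, ← hrank p hp]
    have h0 : S ⟨_, (0, k), rfl⟩ = 0 := hPA y hy (0, k)
    exact congrArg Subtype.val ((map_eq_zero_iff S hSi).1 h0)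
  have hmemball : ∀ w k, (w, k) ∈ ball (Φ p) ε ↔ w ∈ ball (Φ p).1 ε ∧ k ∈ ball (Φ p).2 ε := by
    intro w k
    rw [← ball_prod_same]; rfl
  have hslice : ∀ w : W, ∀ k : K, HasFDerivAt (fun k : K => (w, k))
      (ContinuousLinearMap.inr ℝ W K) k := fun w k => hasFDerivAt_prodMk_right w k
  have hAconst : ∀ y ∈ ball (Φ p) ε, A y = A (y.1, (Φ p).2) := by
    rintro ⟨w, k⟩ hy
    obtain ⟨hw, hk⟩ := (hmemball w k).1 hy
    have hd : ∀ k' ∈ ball (Φ p).2 ε, HasFDerivAt (fun k => A (w, k)) (0 : K →L[ℝ] G) k' := by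
      intro k' hk'
      have hm := (hmemball w k').2 ⟨hw, hk'⟩
      have h1 := (hAd _ hm).differentiableAt.hasFDerivAt.comp k' (hslice w k')
      refine h1.congr_fderiv ?_
      ext u
      exact hker _ hm u
    exact isOpen_ball.is_const_of_fderiv_eq_zero (𝕜 := ℝ) (convex_ball _ _).isPreconnected
      (fun k' hk' => (hd k' hk').differentiableAt.differentiableWithinAt)
      (fun k' hk' => (hd k' hk').fderiv) hk (mem_ball_self hε)
  have hDA : ∀ k ∈ ball (Φ p).2 ε,
      fderiv ℝ A ((Φ p).1, k) = fderiv ℝ A (Φ p) := by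
    intro k hk
    have hm := (hmemball (Φ p).1 k).2 ⟨mem_ball_self hε, hk⟩
    have h1 : A =ᶠ[𝓝 ((Φ p).1, k)] fun y => A (y.1, (Φ p).2) := by
      filter_upwards [isOpen_ball.mem_nhds hm] with y hy using hAconst y hy
    have h2 : HasFDerivAt (fun y : W × K => (y.1, (Φ p).2))
        ((ContinuousLinearMap.fst ℝ W K).prod 0) ((Φ p).1, k) :=
      hasFDerivAt_fst.prodMk (hasFDerivAt_const _ _)
    have h3 := (hAd (Φ p) (mem_ball_self hε)).differentiableAt.hasFDerivAt
    have h4 := (HasFDerivAt.comp (g := A) ((Φ p).1, k) h3 h2).congr_of_eventuallyEq h1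
    rw [h4.fderiv]
    ext u
    · rfl
    · exact (hker _ (mem_ball_self hε) 0).trans (hker _ (mem_ball_self hε) u).symm
  have hfib : ∀ k ∈ ball (Φ p).2 ε,
      LinearMap.range (fderiv ℝ a (Ψ ((Φ p).1, k))).toLinearMap = W := by
    intro k hk
    rw [← hrange _ ((hmemball (Φ p).1 k).2 ⟨mem_ball_self hε, hk⟩), hDA k hk,
      hrange _ (mem_ball_self hε), hΨp]
  have hΦq : ∀ᶠ q in 𝓝 p, Φ q ∈ ball (Φ p) ε :=
    hΦc.continuousAt.eventually_mem (ball_mem_nhds _ hε)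
  filter_upwards [hleft, hΦq] with q hq hqb haq
  have hΦq : Φ q = ((Φ p).1, (Φ q).2) := Prod.ext (congrArg P haq) rfl
  have hk := ((hmemball _ _).1 hqb).2
  refine ⟨?_, fun Y hY hYk => ?_⟩
  · rw [← hfib _ hk, ← hΦq, hq]
  have hd : ∀ k' ∈ ball (Φ p).2 ε,
      HasFDerivAt (fun k => Y (Ψ ((Φ p).1, k))) (0 : K →L[ℝ] H) k' := by
    intro k' hk'
    have hm := (hmemball (Φ p).1 k').2 ⟨mem_ball_self hε, hk'⟩
    obtain ⟨-, hmV, hmd⟩ := hball _ hm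
    have h1 := ((hY.differentiableAt (hV.mem_nhds hmV)).hasFDerivAt.comp _ hmd.hasFDerivAt).comp
      k' (hslice (Φ p).1 k')
    refine h1.congr_fderiv ?_
    ext u
    refine hYk _ hmV (hfib k' hk') _ ?_
    have h2 := hker _ hm u
    rwa [(hAd _ hm).fderiv] at h2
  have hconst := isOpen_ball.is_const_of_fderiv_eq_zero (𝕜 := ℝ) (convex_ball _ _).isPreconnected
      (fun k' hk' => (hd k' hk').differentiableAt.differentiableWithinAt)
      (fun k' hk' => (hd k' hk').fderiv) hk (mem_ball_self hε)
  rwa [← hΦq, hq, Prod.mk.eta, hΨp] at hconst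

/-- The coordinates of a smooth function in a smoothly varying basis are smooth. -/
theorem contDiffOn_coeff_of_eq_sum_smul
    {E F ι : Type*} [NormedAddCommGroup E] [NormedSpace ℝ E]
    [NormedAddCommGroup F] [NormedSpace ℝ F] [FiniteDimensional ℝ F] [Fintype ι]
    {V : Set E} {k : WithTop ℕ∞} {φ : ι → E → F} {g : E → F} {a : E → ι → ℝ}
    (hcard : Fintype.card ι = Module.finrank ℝ F)
    (hφ : ∀ i, ContDiffOn ℝ k (φ i) V) (hg : ContDiffOn ℝ k g V)
    (hindep : ∀ b ∈ V, LinearIndependent ℝ fun i => φ i b)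
    (hsum : ∀ b ∈ V, g b = ∑ i, a b i • φ i b) :
    ContDiffOn ℝ k a V := by
  let M : E → (ι → ℝ) →L[ℝ] F := fun b =>
    ∑ i, (ContinuousLinearMap.proj (R := ℝ) (φ := fun _ : ι => ℝ) i).smulRight (φ i b)
  have hMapply : ∀ b y, M b y = ∑ i, y i • φ i b := fun b y => by simp [M]
  have hM : ContDiffOn ℝ k M V :=
    ContDiffOn.sum fun i _ => contDiffOn_const.smulRight (hφ i)
  have hinv : ∀ b ∈ V, (M b).IsInvertible := by
    intro b hb
    have hinj : Function.Injective (M b).toLinearMap := by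
      refine (injective_iff_map_eq_zero _).2 fun y hy => funext fun i => ?_
      exact Fintype.linearIndependent_iff.1 (hindep b hb) y ((hMapply b y).symm.trans hy) i
    refine ⟨(LinearEquiv.ofInjectiveOfFinrankEq _ hinj
      (by rw [Module.finrank_fintype_fun_eq_card, hcard])).toContinuousLinearEquiv, ?_⟩
    ext1 y
    rfl
  have hinvc : ContDiffOn ℝ k (fun b => (M b).inverse (g b)) V := fun b hb =>
    ((hinv b hb).contDiffAt_map_inverse.comp_contDiffWithinAt b (hM b hb)).clm_apply (hg b hb)
  refine hinvc.congr fun b hb => ?_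
  rw [hsum b hb, ← hMapply, eq_comm, (hinv b hb).inverse_apply_eq]

/-- If `df = ∑ aᵢ dfᵢ` with `aᵢ` real, the bilinear form `∑ daᵢ ⊗ d(Re fᵢ)` is symmetric. -/
theorem sum_fderiv_coeff_mul_fderiv_symm
    {E ι : Type*} [NormedAddCommGroup E] [NormedSpace ℂ E] [Fintype ι]
    {f : E → ℂ} {fi : ι → E → ℂ} {a : E → ι → ℝ} {b : E}
    (hf : ContDiffAt ℂ 2 f b) (hfi : ∀ i, ContDiffAt ℂ 2 (fi i) b)
    (ha : DifferentiableAt ℝ a b)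
    (hsum : ∀ᶠ x in 𝓝 b, fderiv ℂ f x = ∑ i, a x i • fderiv ℂ (fi i) x) (u v : E) :
    ∑ i, fderiv ℝ a b u i * (fderiv ℂ (fi i) b v).re =
      ∑ i, fderiv ℝ a b v i * (fderiv ℂ (fi i) b u).re := by
  have hdiff : ∀ {g : E → ℂ}, ContDiffAt ℂ 2 g b → HasFDerivAt (fderiv ℂ g)
      ((fderiv ℂ (fderiv ℂ g) b).restrictScalars ℝ) b := fun hg =>
    ((hg.fderiv_right (m := 1) (by norm_num [one_add_one_eq_two])).differentiableAt
      (by simp)).hasFDerivAt.restrictScalars ℝ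
  have hsymm : ∀ {g : E → ℂ}, ContDiffAt ℂ 2 g b →
      fderiv ℂ (fderiv ℂ g) b u v = fderiv ℂ (fderiv ℂ g) b v u := fun hg =>
    hg.isSymmSndFDerivAt (by simp) u v
  have hai : ∀ i, HasFDerivAt (fun x => a x i)
      ((ContinuousLinearMap.proj (R := ℝ) (φ := fun _ : ι => ℝ) i).comp (fderiv ℝ a b)) b :=
    fun i => (hasFDerivAt_pi'.1 ha.hasFDerivAt) i
  have hprod := HasFDerivAt.fun_sum (u := Finset.univ) fun i _ => (hai i).fun_smul (hdiff (hfi i))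
  have heq := (hdiff hf).unique (hprod.congr_of_eventuallyEq hsum)
  have happ : ∀ u v, fderiv ℂ (fderiv ℂ f) b u v =
      ∑ i, (a b i • fderiv ℂ (fderiv ℂ (fi i)) b u v + fderiv ℝ a b u i • fderiv ℂ (fi i) b v) := by
    intro u v
    have := congrArg (fun l : E →L[ℝ] E →L[ℂ] ℂ => l u v) heq
    simpa using this
  have h := (happ u v).symm.trans ((hsymm hf).trans (happ v u))
  simp only [Finset.sum_add_distrib, hsymm (hfi _)] at h
  simpa using congrArg Complex.re (add_left_cancel h)

theorem Matrix.mulVecLin_surjective_of_linearIndependent_row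
    {K m n : Type*} [Field K] [Fintype m] [Fintype n] {M : Matrix m n K}
    (hM : LinearIndependent K M.row) : Function.Surjective M.mulVecLin := by
  rw [← LinearMap.range_eq_top]
  refine Submodule.eq_top_of_finrank_eq ?_
  rw [Module.finrank_fintype_fun_eq_card, ← hM.rank_matrix, Matrix.rank]

theorem finrank_real_dual_pi_complex (n : ℕ) :
    Module.finrank ℝ ((Fin n → ℂ) →L[ℂ] ℂ) = 2 * n := by
  rw [finrank_real_of_complex,
    ← (LinearMap.toContinuousLinearMap (𝕜 := ℂ) (E := Fin n → ℂ) (F' := ℂ)).finrank_eq]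
  simp

/-- (Lemma `leaffine`.) With `f, f₁, …, f_{2n}` holomorphic on an open `V ⊆ ℂⁿ`, the `df_i(b)`
linearly independent over `ℝ` at each point, `a : V → ℝ^{2n}` the unique real-valued map with
`df = Σᵢ aᵢ dfᵢ`, and `da` of constant rank `r` on `V`: the fibers of `a` are affine in the
real coordinates `xᵢ = Re fᵢ`. -/
theorem stmt_11 {n r : ℕ} {V : Set (Fin n → ℂ)} (hV : IsOpen V)
    (f : (Fin n → ℂ) → ℂ) (fi : Fin (2 * n) → (Fin n → ℂ) → ℂ)
    (hf : DifferentiableOn ℂ f V) (hfi : ∀ i, DifferentiableOn ℂ (fi i) V)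
    (hindep : ∀ b ∈ V,
      LinearIndependent ℝ (fun i : Fin (2 * n) => (fderiv ℂ (fi i) b).restrictScalars ℝ))
    (a : (Fin n → ℂ) → Fin (2 * n) → ℝ)
    (ha : ∀ b ∈ V, fderiv ℂ f b = ∑ i, ((a b i : ℂ) • fderiv ℂ (fi i) b))
    (hrank : ∀ b ∈ V, Module.finrank ℝ (LinearMap.range (fderiv ℝ a b).toLinearMap) = r) :
    ∀ c : Fin (2 * n) → ℝ, ∀ p ∈ V, a p = c →
      ∃ L : (Fin (2 * n) → ℝ) →ₗ[ℝ] (Fin r → ℝ), Function.Surjective L ∧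
        ∃ c' : Fin r → ℝ,
          ∀ q ∈ connectedComponentIn {x | x ∈ V ∧ a x = c} p,
            L (fun i => (fi i q).re) = c' := by
  have hfc : ContDiffOn ℂ 2 f V := hf.contDiffOn_of_finiteDimensional hV 2
  have hfic : ∀ i, ContDiffOn ℂ 2 (fi i) V := fun i =>
    (hfi i).contDiffOn_of_finiteDimensional hV 2
  have hfderiv : ∀ {g : (Fin n → ℂ) → ℂ}, ContDiffOn ℂ 2 g V → ContDiffOn ℝ 1 (fderiv ℂ g) V :=
    fun hg => (hg.fderiv_of_isOpen hV (by norm_num [one_add_one_eq_two])).restrict_scalars ℝ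
  have ha' : ∀ b ∈ V, fderiv ℂ f b = ∑ i, a b i • fderiv ℂ (fi i) b := ha
  have hac : ContDiffOn ℝ 1 a V :=
    contDiffOn_coeff_of_eq_sum_smul (by simp [finrank_real_dual_pi_complex])
      (fun i => hfderiv (hfic i)) (hfderiv hfc)
      (fun b hb => (hindep b hb).of_comp
        (ContinuousLinearMap.restrictScalarsₗ ℂ (Fin n → ℂ) ℂ ℝ ℝ)) ha'
  have hsymm : ∀ b ∈ V, ∀ u v, ∑ i, fderiv ℝ a b u i * (fderiv ℂ (fi i) b v).re =
      ∑ i, fderiv ℝ a b v i * (fderiv ℂ (fi i) b u).re := fun b hb u v =>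
    sum_fderiv_coeff_mul_fderiv_symm (hfc.contDiffAt (hV.mem_nhds hb))
      (fun i => (hfic i).contDiffAt (hV.mem_nhds hb))
      ((hac.contDiffAt (hV.mem_nhds hb)).differentiableAt (by simp))
      (eventually_of_mem (hV.mem_nhds hb) ha') u v
  rintro c p hp rfl
  let w := Module.finBasisOfFinrankEq ℝ _ (hrank p hp)
  let M : Matrix (Fin r) (Fin (2 * n)) ℝ := Matrix.of fun j => (w j : Fin (2 * n) → ℝ)
  have hM : LinearIndependent ℝ M.row :=
    w.linearIndependent.map' (Submodule.subtype _) (Submodule.ker_subtype _)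
  let X : (Fin n → ℂ) → Fin (2 * n) → ℝ := fun q i => (fi i q).re
  have hX : ∀ b ∈ V, HasFDerivAt X (ContinuousLinearMap.pi fun i =>
      Complex.reCLM.comp ((fderiv ℂ (fi i) b).restrictScalars ℝ)) b := fun b hb =>
    hasFDerivAt_pi.2 fun i => Complex.reCLM.hasFDerivAt.comp b
      (((hfi i).differentiableAt (hV.mem_nhds hb)).hasFDerivAt.restrictScalars ℝ)
  let Lc : (Fin (2 * n) → ℝ) →L[ℝ] (Fin r → ℝ) := M.mulVecLin.toContinuousLinearMap
  refine ⟨M.mulVecLin, Matrix.mulVecLin_surjective_of_linearIndependent_row hM,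
    M.mulVecLin (X p), fun q hq => ?_⟩
  have hYk : ∀ x ∈ V, LinearMap.range (fderiv ℝ a x).toLinearMap =
      LinearMap.range (fderiv ℝ a p).toLinearMap → ∀ u, fderiv ℝ a x u = 0 →
      fderiv ℝ (Lc ∘ X) x u = 0 := by
    intro x hx hrange u hu
    rw [(Lc.hasFDerivAt.comp x (hX x hx)).fderiv]
    ext j
    obtain ⟨v, hv⟩ : (w j : Fin (2 * n) → ℝ) ∈ LinearMap.range (fderiv ℝ a x).toLinearMap := by
      rw [hrange]; exact (w j).2
    have hv' : fderiv ℝ a x v = w j := hv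
    have h := hsymm x hx v u
    rw [hv', hu] at h
    simpa [Lc, M, Matrix.mulVec, dotProduct] using h
  have hYd : DifferentiableOn ℝ (Lc ∘ X) V := fun x hx =>
    (Lc.hasFDerivAt.comp x (hX x hx)).differentiableAt.differentiableWithinAt
  let S := connectedComponentIn {x | x ∈ V ∧ a x = a p} p
  have hS : S ⊆ {x | x ∈ V ∧ a x = a p} := connectedComponentIn_subset _ _
  have hconst := isPreconnected_connectedComponentIn.induction₂ (s := S)
    (fun x y => LinearMap.range (fderiv ℝ a x).toLinearMap =
        LinearMap.range (fderiv ℝ a y).toLinearMap ∧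
      (LinearMap.range (fderiv ℝ a x).toLinearMap =
        LinearMap.range (fderiv ℝ a p).toLinearMap → Lc (X x) = Lc (X y)))
    (fun x hx => by
      obtain ⟨hxV, hxa⟩ := hS hx
      filter_upwards [nhdsWithin_le_nhds
        (eventually_range_fderiv_eq_and_eq_of_finrank_range_fderiv_eq (H := Fin r → ℝ)
          hV hac hrank hxV), self_mem_nhdsWithin] with y hy hyS
      obtain ⟨h1, h2⟩ := hy ((hS hyS).2.trans hxa.symm)
      exact ⟨h1.symm, fun hxp => (h2 (Lc ∘ X) hYd fun z hz hzx =>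
        hYk z hz (hzx.trans hxp)).symm⟩)
    (fun x y z _ _ _ hxy hyz =>
      ⟨hxy.1.trans hyz.1, fun h => (hxy.2 h).trans (hyz.2 (hxy.1.symm.trans h))⟩)
    (fun x y _ _ hxy => ⟨hxy.1.symm, fun h => (hxy.2 (hxy.1.trans h)).symm⟩)
    (mem_connectedComponentIn ⟨hp, rfl⟩) hq
  exact (hconst.2 rfl).symm
end

section
/- Let U ⊆ ℂ^n be a convex open set and let f₁, …, f_n : U → ℂ be holomorphic functions satisfying the symmetry condition ∂fᵢ/∂zⱼ = ∂fⱼ/∂zᵢ on U for all i, j. Then there exists a holomorphic function g : U → ℂ such that ∂g/∂zᵢ = fᵢ on U for every i. -/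
/-- (Local existence of the potential, cf. Donagi–Markman / Theorem `theodonagi`.) If
`f₁, …, f_n` are holomorphic functions on a convex open set `U ⊆ ℂⁿ` satisfying the symmetry
`∂fᵢ/∂zⱼ = ∂fⱼ/∂zᵢ`, then there is a holomorphic function `g` on `U` with `∂g/∂zᵢ = fᵢ`. -/
theorem stmt_13 {n : ℕ} {U : Set (Fin n → ℂ)} (hU : IsOpen U) (hconv : Convex ℝ U)
    (f : Fin n → (Fin n → ℂ) → ℂ) (hf : ∀ i, DifferentiableOn ℂ (f i) U)
    (hsym : ∀ i j, ∀ z ∈ U,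
      fderiv ℂ (f i) z (Pi.single j 1) = fderiv ℂ (f j) z (Pi.single i 1)) :
    ∃ g : (Fin n → ℂ) → ℂ, DifferentiableOn ℂ g U ∧
      ∀ z ∈ U, ∀ i, fderiv ℂ g z (Pi.single i 1) = f i z := by
  let L : Fin n → (Fin n → ℂ) →L[ℂ] ℂ := fun i ↦ ContinuousLinearMap.proj i
  let ω : (Fin n → ℂ) → (Fin n → ℂ) →L[ℂ] ℂ := fun z ↦ ∑ i, f i z • L i
  let dω : (Fin n → ℂ) → (Fin n → ℂ) →L[ℂ] (Fin n → ℂ) →L[ℂ] ℂ :=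
    fun z ↦ ∑ i, (fderiv ℂ (f i) z).smulRight (L i)
  have hω : ∀ z ∈ U, HasFDerivAt ω (dω z) z := fun z hz ↦
    HasFDerivAt.fun_sum fun i _ ↦
      ((hf i).differentiableAt (hU.mem_nhds hz)).hasFDerivAt.smul_const (L i)
  have hfderiv (z : Fin n → ℂ) (i : Fin n) (x : Fin n → ℂ) :
      fderiv ℂ (f i) z x = ∑ j, x j * fderiv ℂ (f i) z (Pi.single j 1) := by
    conv_lhs => rw [pi_eq_sum_univ' x]
    simp [map_sum]
  have hdω : ∀ z ∈ U, ∀ x y, dω z x y = dω z y x := by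
    intro z hz x y
    simp only [dω, L, sum_apply, ContinuousLinearMap.smulRight_apply,
      smul_apply, ContinuousLinearMap.proj_apply, smul_eq_mul]
    simp only [hfderiv z _ x, hfderiv z _ y, Finset.sum_mul]
    rw [Finset.sum_comm]
    refine Finset.sum_congr rfl fun i _ ↦ Finset.sum_congr rfl fun j _ ↦ ?_
    rw [hsym j i z hz]
    ring
  obtain ⟨g, hg⟩ := hconv.exists_forall_hasFDerivWithinAt_of_hasFDerivWithinAt_symmetric
    (𝕜 := ℂ) (ω := ω) (dω := fun z ↦ (dω z).restrictScalars ℝ)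
    (fun z hz ↦ (hω z hz).restrictScalars ℝ |>.hasFDerivWithinAt)
    (fun z hz x _ y _ ↦ hdω z hz x y)
  have hg' : ∀ z ∈ U, HasFDerivAt g (ω z) z := fun z hz ↦
    (hg z hz).hasFDerivAt (hU.mem_nhds hz)
  refine ⟨g, fun z hz ↦ (hg' z hz).differentiableAt.differentiableWithinAt, fun z hz i ↦ ?_⟩
  rw [(hg' z hz).fderiv]
  simp [ω, L, Pi.single_apply]
end
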